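/- Let K be a field, v ∈ ℤ^n, let K ∈ K[x]^{n×n} be in v-weak Popov form, and let d = rdeg_v(K) ∈ ℤ^n. Let J denote the n×n reversal matrix (ones on the antidiagonal, zeros elsewhere), and let dJ = (d_n,…,d_1) denote the reversed tuple. Then J K^T J is in (−dJ)-weak Popov form. -/

import Mathlib

open Polynomial Matrix

/-- The degree of a polynomial, viewed in `ℤ ∪ {-∞}`. -/
noncomputable def degZ {K : Type*} [Field K] (p : K[X]) : WithBot ℤ :=
  p.degree.map fun a : ℕ => (a : ℤ)

/-- The `s`-row degree of a (row) vector of polynomials. -/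
noncomputable def rdegRow {K : Type*} [Field K] {ν : Type*} [Fintype ν]
    (s : ν → ℤ) (v : ν → K[X]) : WithBot ℤ :=
  Finset.univ.sup fun j => degZ (v j) + (s j : WithBot ℤ)

/-- The `s`-row degree of a polynomial matrix. -/
noncomputable def rdeg {K : Type*} [Field K] {ι ν : Type*} [Fintype ν]
    (s : ν → ℤ) (P : Matrix ι ν K[X]) : ι → WithBot ℤ :=
  fun i => rdegRow s (P i)

/-- The `t`-column degree of a polynomial matrix. -/
noncomputable def cdeg {K : Type*} [Field K] {ι ν : Type*} [Fintype ι]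
    (t : ι → ℤ) (P : Matrix ι ν K[X]) : ν → WithBot ℤ :=
  fun j => Finset.univ.sup fun i => degZ (P i j) + (t i : WithBot ℤ)

/-- Coefficient of integer degree `d` of a polynomial (0 if `d < 0`). -/
noncomputable def coeffZ {K : Type*} [Field K] (p : K[X]) (d : ℤ) : K :=
  if 0 ≤ d then p.coeff d.toNat else 0

/-- The `s`-leading matrix of a polynomial matrix. -/
noncomputable def lm {K : Type*} [Field K] {ι ν : Type*} [Fintype ν]
    (s : ν → ℤ) (P : Matrix ι ν K[X]) : Matrix ι ν K :=
  Matrix.of fun i j =>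
    (rdeg s P i).recBotCoe 0 fun t => coeffZ (P i j) (t - s j)

/-- `P` is in `s`-reduced form: its `s`-leading matrix has full row rank,
i.e. its rows are linearly independent over `K`. -/
def IsReducedForm {K : Type*} [Field K] {ι ν : Type*} [Fintype ν]
    (s : ν → ℤ) (P : Matrix ι ν K[X]) : Prop :=
  LinearIndependent K fun i => lm s P i

open Classical in
/-- The `s`-pivot index of a row vector: the largest column index where the
`s`-row degree is attained (with a nonzero entry); `⊥` for the zero row. -/
noncomputable def piv {K : Type*} [Field K] {ν : Type*} [Fintype ν] [LinearOrder ν]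
    (s : ν → ℤ) (v : ν → K[X]) : WithBot ν :=
  (Finset.univ.filter fun j => v j ≠ 0 ∧ degZ (v j) + (s j : WithBot ℤ) = rdegRow s v).max

/-- The `s`-pivot degree of a row vector (junk value `0` for the zero row). -/
noncomputable def pivDeg {K : Type*} [Field K] {ν : Type*} [Fintype ν] [LinearOrder ν]
    (s : ν → ℤ) (v : ν → K[X]) : ℕ :=
  ((piv s v).map fun j => (v j).natDegree).unbotD 0

/-- `P` is in `s`-weak Popov form: no zero row and strictly increasing `s`-pivot indices. -/
def IsWeakPopov {K : Type*} [Field K] {ι ν : Type*} [Fintype ν] [LinearOrder ν] [Preorder ι]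
    (s : ν → ℤ) (P : Matrix ι ν K[X]) : Prop :=
  (∀ i, piv s (P i) ≠ ⊥) ∧ StrictMono fun i => piv s (P i)

/-- `P` is in `s`-unordered weak Popov form: no zero row and pairwise distinct
`s`-pivot indices. -/
def IsUWeakPopov {K : Type*} [Field K] {ι ν : Type*} [Fintype ν] [LinearOrder ν]
    (s : ν → ℤ) (P : Matrix ι ν K[X]) : Prop :=
  (∀ i, piv s (P i) ≠ ⊥) ∧ Function.Injective fun i => piv s (P i)

/-- `P` is in `s`-Popov form: `s`-weak Popov, monic pivots, and each pivot entry
has degree strictly larger than the other entries of its column. -/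
def IsPopov {K : Type*} [Field K] {ι ν : Type*} [Fintype ν] [LinearOrder ν] [Preorder ι]
    (s : ν → ℤ) (P : Matrix ι ν K[X]) : Prop :=
  IsWeakPopov s P ∧
    ∀ i (j : ν), piv s (P i) = (j : WithBot ν) →
      (P i j).Monic ∧ ∀ i', i' ≠ i → (P i' j).degree < (P i j).degree

/-- The row space of a polynomial matrix. -/
noncomputable def rowSpace {K : Type*} [Field K] {ι ν : Type*} (P : Matrix ι ν K[X]) :
    Submodule K[X] (ν → K[X]) :=
  Submodule.span K[X] (Set.range fun i => P i)

/-- The rows of `B` form a basis of the module `M`. -/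
def IsBasisOf {K : Type*} [Field K] {ι ν : Type*} (B : Matrix ι ν K[X])
    (M : Submodule K[X] (ν → K[X])) : Prop :=
  LinearIndependent K[X] (fun i => B i) ∧
    Submodule.span K[X] (Set.range fun i => B i) = M

/-- The left kernel of a polynomial matrix. -/
noncomputable def leftKernel {K : Type*} [Field K] {ι ν : Type*} [Fintype ι]
    (F : Matrix ι ν K[X]) : Submodule K[X] (ι → K[X]) :=
  LinearMap.ker F.vecMulLinear

theorem degZ_of_ne {K : Type*} [Field K] {p : K[X]} (hp : p ≠ 0) :
    degZ p = ((p.natDegree : ℤ) : WithBot ℤ) := by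
  unfold degZ
  rw [Polynomial.degree_eq_natDegree hp]
  rfl

theorem degZ_zero_aux {K : Type*} [Field K] : degZ (0 : K[X]) = ⊥ := by
  unfold degZ
  rw [Polynomial.degree_zero]
  rfl

theorem piv_eq_imp {K : Type*} [Field K] {n : ℕ} (s : Fin n → ℤ) (w : Fin n → K[X]) (j : Fin n)
    (h : piv s w = (j : WithBot (Fin n))) :
    w j ≠ 0 ∧ rdegRow s w = (((w j).natDegree + s j : ℤ) : WithBot ℤ) ∧
      ∀ k, w k ≠ 0 → ((w k).natDegree + s k : ℤ) ≤ (w j).natDegree + s j ∧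
        (j < k → ((w k).natDegree + s k : ℤ) < (w j).natDegree + s j) := by
  classical
  unfold piv at h
  have hm := Finset.mem_of_max h
  simp only [Finset.mem_filter, Finset.mem_univ, true_and] at hm
  obtain ⟨h0, h1⟩ := hm
  rw [degZ_of_ne h0, ← WithBot.coe_add] at h1
  refine ⟨h0, h1.symm, fun k hk => ?_⟩
  have hle : degZ (w k) + (s k : WithBot ℤ) ≤ rdegRow s w :=
    Finset.le_sup (f := fun j => degZ (w j) + (s j : WithBot ℤ)) (Finset.mem_univ k)
  rw [← h1, degZ_of_ne hk, ← WithBot.coe_add, WithBot.coe_le_coe] at hle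
  refine ⟨hle, fun hjk => lt_of_le_of_ne hle fun he => ?_⟩
  have := Finset.le_max (s := Finset.univ.filter fun j => w j ≠ 0 ∧
    degZ (w j) + (s j : WithBot ℤ) = rdegRow s w) (a := k) (by
      simp only [Finset.mem_filter, Finset.mem_univ, true_and]
      refine ⟨hk, ?_⟩
      rw [← h1, degZ_of_ne hk, ← WithBot.coe_add, he])
  rw [h, WithBot.coe_le_coe] at this
  exact absurd hjk (not_lt.mpr this)

theorem piv_eq_of {K : Type*} [Field K] {n : ℕ} (s : Fin n → ℤ) (w : Fin n → K[X]) (j : Fin n)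
    (h0 : w j ≠ 0)
    (h : ∀ k, w k ≠ 0 → ((w k).natDegree + s k : ℤ) ≤ (w j).natDegree + s j ∧
        (j < k → ((w k).natDegree + s k : ℤ) < (w j).natDegree + s j)) :
    piv s w = (j : WithBot (Fin n)) := by
  classical
  have h1 : rdegRow s w = (((w j).natDegree + s j : ℤ) : WithBot ℤ) := by
    apply le_antisymm
    · refine Finset.sup_le fun k _ => ?_
      by_cases hk : w k = 0
      · rw [hk, degZ_zero_aux, WithBot.bot_add]
        exact bot_le
      · rw [degZ_of_ne hk, ← WithBot.coe_add, WithBot.coe_le_coe]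
        exact (h k hk).1
    · rw [WithBot.coe_add, ← degZ_of_ne h0]
      exact Finset.le_sup (f := fun j => degZ (w j) + (s j : WithBot ℤ)) (Finset.mem_univ j)
  unfold piv
  apply le_antisymm
  · refine Finset.max_le fun k hk => ?_
    simp only [Finset.mem_filter, Finset.mem_univ, true_and] at hk
    obtain ⟨hk, he⟩ := hk
    rw [h1, degZ_of_ne hk, ← WithBot.coe_add, WithBot.coe_inj] at he
    rw [WithBot.coe_le_coe]
    by_contra hlt
    exact absurd he ((h k hk).2 (not_le.mp hlt)).ne
  · apply Finset.le_max
    simp only [Finset.mem_filter, Finset.mem_univ, true_and]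
    exact ⟨h0, by rw [h1, degZ_of_ne h0, ← WithBot.coe_add]⟩

/-- Lemma 3.2 (c): if `M` is in `v`-weak Popov form with
`d = rdeg_v(M)`, then `J Mᵀ J` is in `(−dJ)`-weak Popov form, where `J` is the
reversal matrix and `dJ` the reversed tuple. -/
theorem rev_transpose_rev_weakPopov {K : Type*} [Field K] {n : ℕ}
    (v : Fin n → ℤ) (M : Matrix (Fin n) (Fin n) K[X]) (hM : IsWeakPopov v M)
    (d : Fin n → ℤ) (hd : ∀ i, rdeg v M i = ((d i : ℤ) : WithBot ℤ)) :
    IsWeakPopov (fun i => -d (Fin.rev i))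
      (Matrix.of fun i j => M (Fin.rev j) (Fin.rev i)) := by
  have hdiag : ∀ i, piv v (M i) = (i : WithBot (Fin n)) := by
    obtain ⟨hb, hs⟩ := hM
    choose f hf using fun i => WithBot.ne_bot_iff_exists.mp (hb i)
    have hfm : StrictMono f := fun a b hab => by
      have := hs hab
      simp only [← hf, WithBot.coe_lt_coe] at this
      exact this
    have hfs : Function.Surjective f := Finite.surjective_of_injective hfm.injective
    have : f = id := (StrictMono.range_inj hfm strictMono_id).mp (by
      rw [hfs.range_eq, Set.range_id])
    intro i
    rw [← hf i, this]
    rfl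
  have key := fun i => piv_eq_imp v (M i) i (hdiag i)
  have hdi : ∀ i, d i = (M i i).natDegree + v i := fun i => by
    have h1 := hd i
    unfold rdeg at h1
    rw [(key i).2.1, WithBot.coe_inj] at h1
    exact h1.symm
  have hfin : ∀ i, piv (fun i => -d (Fin.rev i))
      ((Matrix.of fun i j => M (Fin.rev j) (Fin.rev i)) i) = (i : WithBot (Fin n)) := by
    intro i
    apply piv_eq_of
    · simpa using (key i.rev).1
    · intro k hk
      simp only [Matrix.of_apply] at hk ⊢
      have h := (key k.rev).2.2 i.rev hk
      have h1 := hdi k.rev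
      have h2 := hdi i.rev
      refine ⟨by linarith [h.1], fun hik => ?_⟩
      have := h.2 (Fin.rev_lt_rev.mpr hik)
      linarith
  refine ⟨fun i => ?_, fun a b hab => ?_⟩
  · rw [hfin]
    exact WithBot.coe_ne_bot
  · simp only [hfin]
    exact WithBot.coe_lt_coe.mpr hab
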